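/- Let p > 2 be a prime such that p does not divide the central trinomial coefficient T_n for any n < p. Then the natural density of {n ∈ ℕ : p ∣ M_n} (where M_n is the n-th Motzkin number) exists and is at least 2/(p(p−1)). -/

import Mathlib

open Polynomial Filter

/-- The central trinomial coefficient `T_n`:
the coefficient of `X^n` in `(1 + X + X^2)^n`. -/
noncomputable def centralTrinomial (n : ℕ) : ℤ :=
  ((1 + X + X ^ 2 : Polynomial ℤ) ^ n).coeff n

/-- The Motzkin number `M_n`: the coefficient of `X^n` in `(1 + X + X^2)^n * (1 - X^2)`. -/
noncomputable def motzkin (n : ℕ) : ℤ :=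
  (((1 + X + X ^ 2 : Polynomial ℤ) ^ n) * (1 - X ^ 2)).coeff n

/-!
Write the trinomial coefficients as the coefficients of `(X⁻¹ + 1 + X) ^ n`. Pascal's rule,
symmetry and differentiation express `2 M_n` and `2 (n + 1) M_n` through `T_n`, `T_{n+1}`,
`T_{n+2}`; comparing the two gives the three-term recurrence of `T`.

Modulo `p`, Frobenius gives the Lucas congruence `T_{pm+r} = T_m T_r`, and the recurrence gives the
reflection `(-3)^n T_{p-1-n} = ε T_n` with `ε = T_{p-1}`; for `p ≠ 3`, taking `n = p - 1` shows
`ε ^ 2 = 1`. Let `R_c` be the set of `n` with `T_{n+1} = c T_n`. By Lucas, whether `pm + r ∈ R_c` is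
independent of `m` when `r < p - 1`, while `pm + (p - 1) ∈ R_c` iff `m ∈ R_{cε}`. As multiplying by
`ε` twice is the identity, `R_c` has density `(p a + b) / (p ^ 2 - 1)`, where `a` and `b` count the
`r < p - 1` in `R_c` and `R_{cε}`. If `c` is `±1` or `±3` both are positive, because `0 ∈ R_1`,
`1 ∈ R_3` and reflection sends `R_c` to `R_{-3/c}`; so this density is at least `1 / (p - 1)`.

Finally `p ∣ M_{pm+r}` is independent of `m` for `r < p - 2`, whereas for `r = p - 2` and
`r = p - 1` it says `m ∈ R_ε` and `m ∈ R_{-3ε}`. Averaging over the `p` residues gives the bound.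
The case `p = 3` does not occur, as `T_2 = 3`.
-/

open Asymptotics
open scoped Topology LaurentPolynomial
open LaurentPolynomial (T)

open Classical in
/-- The counting function `N ↦ |{n ∈ A : n < N}|` of a set of natural numbers. -/
noncomputable def countBelow (A : Set ℕ) (N : ℕ) : ℕ :=
  Nat.count (· ∈ A) N

lemma countBelow_eq_card_filter_range (A : Set ℕ) [DecidablePred (· ∈ A)] (N : ℕ) :
    countBelow A N = ((Finset.range N).filter (· ∈ A)).card := by
  rw [countBelow, Nat.count_eq_card_filter_range]
  congr

lemma countBelow_le (A : Set ℕ) (N : ℕ) : countBelow A N ≤ N := by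
  classical
  exact Nat.count_le _

lemma countBelow_add (A : Set ℕ) (M N : ℕ) :
    countBelow A (M + N) = countBelow A M + countBelow {n | M + n ∈ A} N := by
  classical
  exact Nat.count_add _ M N

lemma countBelow_pos_of_mem {A : Set ℕ} {n N : ℕ} (hn : n ∈ A) (hN : n < N) :
    0 < countBelow A N := by
  classical
  exact (Nat.zero_le _).trans_lt (Nat.count_strict_mono hn hN)

lemma countBelow_setOf_const (P : Prop) [Decidable P] (N : ℕ) :
    countBelow {_n | P} N = if P then N else 0 := by
  by_cases hP : P <;> simp [countBelow, hP]

/-- `A` has natural density `d`. As a relation, it asserts that the limit exists. -/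
def HasDensity (A : Set ℕ) (d : ℝ) : Prop :=
  Tendsto (fun N : ℕ ↦ (countBelow A N : ℝ) / N) atTop (𝓝 d)

lemma hasDensity_iff_isLittleO {A : Set ℕ} {d : ℝ} :
    HasDensity A d ↔
      (fun N : ℕ ↦ (countBelow A N : ℝ) - d * N) =o[atTop] fun N : ℕ ↦ (N : ℝ) := by
  have ne_zero : ∀ᶠ N : ℕ in atTop, (N : ℝ) ≠ 0 :=
    (eventually_gt_atTop 0).mono fun N hN ↦ by positivity
  rw [HasDensity, isLittleO_iff_tendsto' (ne_zero.mono fun N hN h ↦ absurd h hN),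
    ← tendsto_sub_nhds_zero_iff]
  refine tendsto_congr' (ne_zero.mono fun N hN ↦ ?_)
  field_simp

lemma hasDensity_setOf_const (P : Prop) [Decidable P] :
    HasDensity {_n | P} (if P then 1 else 0) := by
  refine hasDensity_iff_isLittleO.2 ((isLittleO_zero _ _).congr_left fun N ↦ ?_)
  rw [countBelow_setOf_const]
  split_ifs <;> simp

lemma isLittleO_const_natCast (c : ℝ) : (fun _ : ℕ ↦ c) =o[atTop] fun N : ℕ ↦ (N : ℝ) :=
  isLittleO_const_left.2 <| .inr <| tendsto_norm_atTop_atTop.comp tendsto_natCast_atTop_atTop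

lemma isLittleO_natLog_natCast (b : ℕ) :
    (fun N : ℕ ↦ (Nat.log b N : ℝ)) =o[atTop] fun N : ℕ ↦ (N : ℝ) := by
  have isLittleO_logb : (fun N : ℕ ↦ Real.logb b N) =o[atTop] fun N : ℕ ↦ (N : ℝ) := by
    simpa [Real.logb, div_eq_inv_mul] using
      (Real.isLittleO_log_id_atTop.comp_tendsto tendsto_natCast_atTop_atTop).const_mul_left
        (Real.log b)⁻¹
  refine IsBigO.trans_isLittleO (IsBigO.of_norm_le fun N ↦ ?_) isLittleO_logb
  simpa using Real.natLog_le_logb N b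

lemma le_mul_log_add_of_le_add_div {e : ℕ → ℝ} {C : ℝ} {q : ℕ} (hq : 1 < q)
    (he : ∀ N, e N ≤ C + e (N / q)) (N : ℕ) : e N ≤ C * (Nat.log q N + 1) + e 0 := by
  induction N using Nat.strong_induction_on with
  | _ N ih =>
    rcases lt_or_ge N q with hN | hN
    · simpa [Nat.div_eq_of_lt hN, Nat.log_of_lt hN] using he N
    · have log_eq : Nat.log q N = Nat.log q (N / q) + 1 := Nat.log_of_one_lt_of_le hq hN
      have := ih (N / q) (Nat.div_lt_self (by lia) hq)
      rw [log_eq]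
      push_cast
      linarith [he N]

lemma isLittleO_natCast_of_le_add_div {e : ℕ → ℝ} {C : ℝ} {q : ℕ} (hq : 1 < q)
    (he₀ : ∀ N, 0 ≤ e N) (he : ∀ N, e N ≤ C + e (N / q)) :
    e =o[atTop] fun N : ℕ ↦ (N : ℝ) := by
  refine IsBigO.trans_isLittleO (IsBigO.of_norm_le fun N ↦ ?_) <|
    (((isLittleO_natLog_natCast q).add (isLittleO_const_natCast 1)).const_mul_left C).add
      (isLittleO_const_natCast (e 0))
  rw [Real.norm_of_nonneg (he₀ N)]
  exact le_mul_log_add_of_le_add_div hq he N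

lemma countBelow_mul (A : Set ℕ) (q M : ℕ) :
    countBelow A (q * M) = ∑ r ∈ Finset.range q, countBelow {m | q * m + r ∈ A} M := by
  induction M with
  | zero => simp [countBelow]
  | succ M ih =>
    rw [mul_add_one, countBelow_add, ih]
    simp only [countBelow, Nat.count_succ, Finset.sum_add_distrib,
      Nat.count_eq_card_filter_range _ q, Finset.card_filter, Set.mem_ofPred_eq]

lemma abs_countBelow_sub_sum_le (A : Set ℕ) {q : ℕ} (hq : 0 < q) (N : ℕ) :
    |(countBelow A N : ℝ) -
      ∑ r ∈ Finset.range q, (countBelow {m | q * m + r ∈ A} (N / q) : ℝ)| ≤ q := by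
  have split_last_block : countBelow A N =
      ∑ r ∈ Finset.range q, countBelow {m | q * m + r ∈ A} (N / q) +
        countBelow {k | q * (N / q) + k ∈ A} (N % q) := by
    rw [← countBelow_mul, ← countBelow_add, Nat.div_add_mod]
  have last_block_le : countBelow {k | q * (N / q) + k ∈ A} (N % q) ≤ q :=
    (countBelow_le _ _).trans (Nat.mod_lt N hq).le
  rw [split_last_block]
  push_cast
  rw [add_sub_cancel_left, Nat.abs_cast]
  exact_mod_cast last_block_le

lemma abs_mul_div_sub_le {q : ℕ} (hq : 0 < q) (N : ℕ) :
    |(q * (N / q : ℕ) - N : ℝ)| ≤ q := by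
  have hN : (q * (N / q : ℕ) + (N % q : ℕ) : ℝ) = N := mod_cast Nat.div_add_mod N q
  have mod_le : ((N % q : ℕ) : ℝ) ≤ q := mod_cast (Nat.mod_lt N hq).le
  rwa [← hN, sub_add_cancel_left, abs_neg, Nat.abs_cast]

lemma HasDensity.of_residues {A : Set ℕ} {q : ℕ} (hq : 0 < q) {d : ℕ → ℝ}
    (hd : ∀ r < q, HasDensity {m | q * m + r ∈ A} (d r)) :
    HasDensity A ((∑ r ∈ Finset.range q, d r) / q) := by
  set D := (∑ r ∈ Finset.range q, d r) / q
  have hDq : D * q = ∑ r ∈ Finset.range q, d r := div_mul_cancel₀ _ (by positivity)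
  have div_isBigO : (fun N : ℕ ↦ ((N / q : ℕ) : ℝ)) =O[atTop] fun N : ℕ ↦ (N : ℝ) :=
    IsBigO.of_norm_le fun N ↦ by simpa using Nat.div_le_self N q
  have slices : (fun N : ℕ ↦ ∑ r ∈ Finset.range q,
      ((countBelow {m | q * m + r ∈ A} (N / q) : ℝ) - d r * (N / q : ℕ)))
        =o[atTop] fun N : ℕ ↦ (N : ℝ) := by
    refine IsLittleO.fun_sum fun r hr ↦ IsLittleO.trans_isBigO ?_ div_isBigO
    exact (hasDensity_iff_isLittleO.1 (hd r (Finset.mem_range.1 hr))).comp_tendsto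
      (Nat.tendsto_div_const_atTop hq.ne')
  have last_block : (fun N : ℕ ↦ (countBelow A N : ℝ) -
      ∑ r ∈ Finset.range q, (countBelow {m | q * m + r ∈ A} (N / q) : ℝ))
        =o[atTop] fun N : ℕ ↦ (N : ℝ) :=
    (IsBigO.of_norm_le (abs_countBelow_sub_sum_le A hq)).trans_isLittleO (isLittleO_const_natCast q)
  have rounding : (fun N : ℕ ↦ (q * (N / q : ℕ) - N : ℝ)) =o[atTop] fun N : ℕ ↦ (N : ℝ) :=
    (IsBigO.of_norm_le (abs_mul_div_sub_le hq)).trans_isLittleO (isLittleO_const_natCast q)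
  refine hasDensity_iff_isLittleO.2 <|
    ((last_block.add slices).add (rounding.const_mul_left D)).congr_left fun N ↦ ?_
  rw [Finset.sum_sub_distrib, ← Finset.sum_mul, ← hDq]
  ring

lemma abs_countBelow_sub_le_add_div {A B : Set ℕ} {q : ℕ} (hq : 0 < q)
    (hA : ∀ r < q - 1, ∀ m, q * m + r ∈ A ↔ r ∈ A) (hB : ∀ m, q * m + (q - 1) ∈ A ↔ m ∈ B)
    {d d' : ℝ} (hd : q * d = countBelow A (q - 1) + d') (N : ℕ) :
    |(countBelow A N : ℝ) - d * N| ≤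
      q * (1 + |d|) + |(countBelow B (N / q) : ℝ) - d' * (N / q : ℕ)| := by
  classical
  have sum_slices : ∑ r ∈ Finset.range q, (countBelow {m | q * m + r ∈ A} (N / q) : ℝ) =
      countBelow A (q - 1) * (N / q : ℕ) + countBelow B (N / q) := by
    nth_rw 1 [← Nat.sub_add_cancel hq]
    rw [Finset.sum_range_succ]
    congr 1
    · rw [countBelow_eq_card_filter_range, Finset.card_filter]
      push_cast
      rw [Finset.sum_mul]
      refine Finset.sum_congr rfl fun r hr ↦ ?_
      simp only [hA r (Finset.mem_range.1 hr), countBelow_setOf_const]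
      split_ifs <;> simp
    · simp only [hB, Set.ofPred_mem_eq]
  have last_block := abs_countBelow_sub_sum_le A hq N
  have rounding : |d * (q * (N / q : ℕ) - N : ℝ)| ≤ |d| * q := by
    rw [abs_mul]
    gcongr
    exact abs_mul_div_sub_le hq N
  have decomposition : (countBelow A N : ℝ) - d * N =
      (countBelow A N - ∑ r ∈ Finset.range q, (countBelow {m | q * m + r ∈ A} (N / q) : ℝ)) +
        d * (q * (N / q : ℕ) - N) + (countBelow B (N / q) - d' * (N / q : ℕ)) := by
    rw [sum_slices]
    linear_combination -(N / q : ℕ) * hd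
  rw [decomposition]
  refine (abs_add_three _ _ _).trans ?_
  linarith

lemma HasDensity.of_swap_last_residue {A B : Set ℕ} {q : ℕ} (hq : 1 < q)
    (hA : ∀ r < q - 1, ∀ m, q * m + r ∈ A ↔ r ∈ A) (hAB : ∀ m, q * m + (q - 1) ∈ A ↔ m ∈ B)
    (hB : ∀ r < q - 1, ∀ m, q * m + r ∈ B ↔ r ∈ B) (hBA : ∀ m, q * m + (q - 1) ∈ B ↔ m ∈ A) :
    HasDensity A ((q * countBelow A (q - 1) + countBelow B (q - 1)) / (q ^ 2 - 1)) := by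
  set a : ℝ := (countBelow A (q - 1) : ℝ)
  set b : ℝ := (countBelow B (q - 1) : ℝ)
  set d : ℝ := (q * a + b) / (q ^ 2 - 1) with hd
  set d' : ℝ := (q * b + a) / (q ^ 2 - 1) with hd'
  have hq' : (q : ℝ) ^ 2 - 1 ≠ 0 := by
    have : (1 : ℝ) < q := mod_cast hq
    nlinarith
  have hN : ∀ N, |(countBelow A N : ℝ) - d * N| ≤
      q * (1 + |d|) + q * (1 + |d'|) +
        |(countBelow A (N / (q * q)) : ℝ) - d * (N / (q * q) : ℕ)| := fun N ↦ by
    have stepA := abs_countBelow_sub_le_add_div (by lia) hA hAB (d := d) (d' := d')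
      (by rw [hd, hd']; field_simp; ring) N
    have stepB := abs_countBelow_sub_le_add_div (by lia) hB hBA (d := d') (d' := d)
      (by rw [hd, hd']; field_simp; ring) (N / q)
    rw [Nat.div_div_eq_div_mul] at stepB
    linarith
  exact hasDensity_iff_isLittleO.2 <| isLittleO_abs_left.1 <|
    isLittleO_natCast_of_le_add_div (Nat.one_lt_mul_iff.2 (by lia)) (fun _ ↦ abs_nonneg _) hN

lemma coeff_expand_mul_mul_add {R : Type*} [CommSemiring R] (f : R[X]) {g : R[X]} {p r : ℕ}
    (hr : r < p) (hg : g.natDegree < p + r) (m : ℕ) :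
    (expand R p f * g).coeff (p * m + r) = f.coeff m * g.coeff r := by
  induction f using Polynomial.induction_on' with
  | add f₁ f₂ h₁ h₂ => rw [map_add, add_mul, coeff_add, h₁, h₂, coeff_add, add_mul]
  | monomial k a =>
    rw [expand_monomial, coeff_monomial]
    rcases lt_trichotomy k m with hk | rfl | hk
    · obtain ⟨l, rfl⟩ := Nat.exists_eq_add_of_lt hk
      rw [show p * (k + l + 1) + r = p * (l + 1) + r + k * p by ring, coeff_monomial_mul,
        coeff_eq_zero_of_natDegree_lt (show g.natDegree < p * (l + 1) + r by nlinarith),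
        if_neg (by lia), mul_zero, zero_mul]
    · rw [mul_comm p, add_comm, coeff_monomial_mul, if_pos rfl]
    · rw [← C_mul_X_pow_eq_monomial, mul_assoc, coeff_C_mul, coeff_X_pow_mul',
        if_neg (show ¬ k * p ≤ p * m + r by nlinarith), if_neg hk.ne', mul_zero, zero_mul]

lemma coeff_mul_T {R : Type*} [Semiring R] (f : R[T;T⁻¹]) (m k : ℤ) :
    (f * T m).coeff k = f.coeff (k - m) := by
  rw [T, AddMonoidAlgebra.coeff_mul_single_eq_coeff_mul (m₂ := k - m)
    fun _ _ ↦ eq_sub_iff_add_eq.symm, mul_one]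

lemma coeff_eq_coeff_toLaurent {R : Type*} [Semiring R] (f : R[X]) (n : ℕ) :
    f.coeff n = (toLaurent f).coeff (n : ℤ) := by
  rw [LaurentPolynomial.coeff_toLaurent]
  exact (Finsupp.mapDomain_apply Nat.castEmbedding.injective _ _).symm

/-- The trinomial coefficient: the coefficient of `X ^ k` in `(X⁻¹ + 1 + X) ^ n`. Centring the
trinomial makes the symmetry `k ↦ -k` and Pascal's rule visible. -/
noncomputable def trinomialCoeff (n : ℕ) (k : ℤ) : ℤ :=
  ((T (-1) + 1 + T 1 : ℤ[T;T⁻¹]) ^ n).coeff k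

lemma trinomialCoeff_succ (n : ℕ) (k : ℤ) :
    trinomialCoeff (n + 1) k =
      trinomialCoeff n (k + 1) + trinomialCoeff n k + trinomialCoeff n (k - 1) := by
  simp only [trinomialCoeff, pow_succ, mul_add, mul_one, AddMonoidAlgebra.coeff_add,
    Finsupp.add_apply, coeff_mul_T, sub_neg_eq_add]

lemma trinomialCoeff_neg (n : ℕ) (k : ℤ) : trinomialCoeff n (-k) = trinomialCoeff n k := by
  rw [trinomialCoeff, ← LaurentPolynomial.invert_apply]
  simp only [map_pow, map_add, map_one, LaurentPolynomial.invert_T, neg_neg, trinomialCoeff]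
  rw [add_right_comm, add_comm (T 1), add_right_comm]

lemma toLaurent_trinomial_pow (n : ℕ) :
    toLaurent ((1 + X + X ^ 2 : ℤ[X]) ^ n) = (T (-1) + 1 + T 1) ^ n * T n := by
  have factor : toLaurent (1 + X + X ^ 2 : ℤ[X]) = (T (-1) + 1 + T 1) * T 1 := by
    rw [map_add, map_add, map_one, toLaurent_X, toLaurent_X_pow, add_mul, add_mul, one_mul,
      ← LaurentPolynomial.T_add, ← LaurentPolynomial.T_add, neg_add_cancel,
      LaurentPolynomial.T_zero]
    rfl
  rw [map_pow, factor, mul_pow, LaurentPolynomial.T_pow, mul_one]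

lemma coeff_trinomial_pow (n j : ℕ) :
    ((1 + X + X ^ 2 : ℤ[X]) ^ n).coeff j = trinomialCoeff n (j - n) := by
  rw [coeff_eq_coeff_toLaurent, toLaurent_trinomial_pow, coeff_mul_T, trinomialCoeff]

lemma centralTrinomial_eq_trinomialCoeff (n : ℕ) : centralTrinomial n = trinomialCoeff n 0 := by
  rw [centralTrinomial, coeff_trinomial_pow, sub_self]

lemma motzkin_eq_trinomialCoeff_sub (n : ℕ) :
    motzkin n = trinomialCoeff n 0 - trinomialCoeff n 2 := by
  rw [motzkin, coeff_eq_coeff_toLaurent, map_mul, toLaurent_trinomial_pow, map_sub, map_one,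
    toLaurent_X_pow, mul_sub, mul_one, mul_assoc, ← LaurentPolynomial.T_add,
    AddMonoidAlgebra.coeff_sub, Finsupp.sub_apply, coeff_mul_T, coeff_mul_T,
    ← trinomialCoeff_neg n 2]
  simp [trinomialCoeff]

lemma centralTrinomial_succ (n : ℕ) :
    centralTrinomial (n + 1) = centralTrinomial n + 2 * trinomialCoeff n 1 := by
  rw [centralTrinomial_eq_trinomialCoeff, centralTrinomial_eq_trinomialCoeff, trinomialCoeff_succ,
    zero_add, zero_sub, trinomialCoeff_neg]
  ring

lemma trinomialCoeff_succ_one (n : ℕ) : trinomialCoeff (n + 1) 1 = (n + 1) * motzkin n := by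
  have pascal : trinomialCoeff (n + 1) 1 =
      trinomialCoeff n 2 + trinomialCoeff n 1 + trinomialCoeff n 0 := trinomialCoeff_succ n 1
  have derivative_eq : derivative ((1 + X + X ^ 2 : ℤ[X]) ^ (n + 1)) =
      C (n + 1 : ℤ) *
        ((1 + X + X ^ 2) ^ n + C 2 * ((1 + X + X ^ 2) ^ n * X)) := by
    rw [derivative_pow_succ]
    simp only [derivative_add, derivative_one, derivative_X, derivative_X_pow, C_add, C_1]
    push_cast
    ring
  have coeff_eq : trinomialCoeff (n + 1) 1 * (n + 2) =
      (n + 1) * (trinomialCoeff n 1 + 2 * trinomialCoeff n 0) := by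
    have := congrArg (fun f ↦ coeff f (n + 1)) derivative_eq
    simp only [coeff_derivative, coeff_C_mul, coeff_add, coeff_mul_X, coeff_trinomial_pow] at this
    push_cast at this
    ring_nf at this ⊢
    exact this
  rw [motzkin_eq_trinomialCoeff_sub]
  linear_combination coeff_eq - (n + 1) * pascal

lemma two_mul_succ_mul_motzkin (n : ℕ) :
    2 * ((n + 1) * motzkin n) = centralTrinomial (n + 2) - centralTrinomial (n + 1) := by
  rw [centralTrinomial_succ (n + 1), trinomialCoeff_succ_one]
  ring

lemma two_mul_motzkin (n : ℕ) :
    2 * motzkin n =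
      3 * centralTrinomial n + 2 * centralTrinomial (n + 1) - centralTrinomial (n + 2) := by
  have pascal : trinomialCoeff (n + 1) 1 =
      trinomialCoeff n 2 + trinomialCoeff n 1 + trinomialCoeff n 0 := trinomialCoeff_succ n 1
  rw [centralTrinomial_succ (n + 1), centralTrinomial_succ n, pascal, motzkin_eq_trinomialCoeff_sub,
    centralTrinomial_eq_trinomialCoeff]
  ring

lemma centralTrinomial_rec (n : ℕ) :
    (n + 2) * centralTrinomial (n + 2) =
      (2 * n + 3) * centralTrinomial (n + 1) + 3 * (n + 1) * centralTrinomial n := by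
  linear_combination (n + 1) * two_mul_motzkin n - two_mul_succ_mul_motzkin n

lemma centralTrinomial_cast {R : Type*} [Ring R] (n : ℕ) :
    (centralTrinomial n : R) = ((1 + X + X ^ 2 : R[X]) ^ n).coeff n := by
  have := coeff_map (p := (1 + X + X ^ 2 : ℤ[X]) ^ n) (Int.castRingHom R) n
  simpa [centralTrinomial] using this.symm

lemma centralTrinomial_zero : centralTrinomial 0 = 1 := by
  simp [centralTrinomial]

lemma centralTrinomial_one : centralTrinomial 1 = 1 := by
  simp [centralTrinomial, coeff_one, coeff_X]

lemma centralTrinomial_two : centralTrinomial 2 = 3 := by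
  have := centralTrinomial_rec 0
  norm_num [centralTrinomial_zero, centralTrinomial_one] at this
  lia

section ModPrime

variable {p : ℕ} [Fact p.Prime]

lemma centralTrinomial_mul_add {r : ℕ} (hr : r < p) (m : ℕ) :
    (centralTrinomial (p * m + r) : ZMod p) = centralTrinomial m * centralTrinomial r := by
  have hdeg : ((1 + X + X ^ 2 : (ZMod p)[X]) ^ r).natDegree < p + r := by
    have : (1 + X + X ^ 2 : (ZMod p)[X]).natDegree ≤ 2 := by compute_degree
    have := natDegree_pow_le_of_le r this
    lia
  rw [centralTrinomial_cast, pow_add, mul_comm p, pow_mul, ← ZMod.expand_card, mul_comm m,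
    coeff_expand_mul_mul_add _ hr hdeg, centralTrinomial_cast, centralTrinomial_cast]

lemma centralTrinomial_reflect {n k : ℕ} (h : n + k + 1 = p) :
    (-3) ^ n * (centralTrinomial k : ZMod p) =
      centralTrinomial (p - 1) * centralTrinomial n := by
  have rec_mod (j : ℕ) := congrArg (Int.cast : ℤ → ZMod p) (centralTrinomial_rec j)
  push_cast at rec_mod
  induction n using Nat.twoStepInduction generalizing k with
  | zero =>
    obtain rfl : k = p - 1 := by lia
    simp [centralTrinomial_zero]
  | one =>
    have k_add_two : (k + 2 : ZMod p) = 0 := by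
      exact_mod_cast (ZMod.natCast_eq_zero_iff (k + 2) p).2 ⟨1, by lia⟩
    rw [show p - 1 = k + 1 by lia, centralTrinomial_one]
    push_cast
    linear_combination k_add_two * (centralTrinomial (k + 2) - 2 * centralTrinomial (k + 1) -
      3 * centralTrinomial k) - rec_mod k
  | more n ih₀ ih₁ =>
    have k_eq : (k : ZMod p) = -n - 3 := by
      have : (n + k + 3 : ZMod p) = 0 := by
        exact_mod_cast (ZMod.natCast_eq_zero_iff (n + k + 3) p).2 ⟨1, by lia⟩
      linear_combination this
    have n_add_two_ne_zero : (n + 2 : ZMod p) ≠ 0 := by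
      have : ¬ p ∣ n + 2 := Nat.not_dvd_of_pos_of_lt (by lia) (by lia)
      exact_mod_cast mt (ZMod.natCast_eq_zero_iff (n + 2) p).1 this
    have reflect₀ := ih₀ (k := k + 2) (by lia)
    have reflect₁ := ih₁ (k := k + 1) (by lia)
    -- As `k = -n - 3`, the recurrence at `k` is the one at `n` read backwards.
    have rec_k := rec_mod k
    rw [k_eq] at rec_k
    refine mul_left_cancel₀ n_add_two_ne_zero ?_
    linear_combination (2 * n + 3) * reflect₁ + 3 * (n + 1) * reflect₀ -
      (-3) ^ (n + 1) * rec_k - (centralTrinomial (p - 1) : ZMod p) * rec_mod n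

lemma neg_three_ne_zero (hp3 : p ≠ 3) : (-3 : ZMod p) ≠ 0 := by
  have : ¬ p ∣ 3 := mt (Nat.prime_dvd_prime_iff_eq Fact.out Nat.prime_three).1 hp3
  exact neg_ne_zero.2 (mod_cast mt (ZMod.natCast_eq_zero_iff 3 p).1 this)

lemma centralTrinomial_pred_sq (hp3 : p ≠ 3) : (centralTrinomial (p - 1) : ZMod p) ^ 2 = 1 := by
  have hp := (Fact.out : p.Prime).pos
  have reflect := centralTrinomial_reflect (p := p) (n := p - 1) (k := 0) (by lia)
  rw [ZMod.pow_card_sub_one_eq_one (neg_three_ne_zero hp3), centralTrinomial_zero] at reflect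
  rw [sq, ← reflect, Int.cast_one, mul_one]

lemma centralTrinomial_cast_ne_zero (hT : ∀ n < p, ¬ (p : ℤ) ∣ centralTrinomial n) (n : ℕ) :
    (centralTrinomial n : ZMod p) ≠ 0 := by
  have hp : p.Prime := Fact.out
  induction n using Nat.strong_induction_on with
  | _ n ih =>
    rcases lt_or_ge n p with hn | hn
    · exact fun h ↦ hT n hn ((ZMod.intCast_zmod_eq_zero_iff_dvd _ p).1 h)
    · rw [← Nat.div_add_mod n p, centralTrinomial_mul_add (Nat.mod_lt n hp.pos)]
      exact mul_ne_zero (ih _ (Nat.div_lt_self (hp.pos.trans_le hn) hp.one_lt))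
        (ih _ ((Nat.mod_lt n hp.pos).trans_le hn))

variable (p) in
/-- The set of `n` for which `T_{n+1} / T_n` equals `c` modulo `p` (written without division). -/
def ratioSet (c : ZMod p) : Set ℕ :=
  {n | (centralTrinomial (n + 1) : ZMod p) = c * centralTrinomial n}

lemma mul_add_mem_ratioSet (hT : ∀ n < p, ¬ (p : ℤ) ∣ centralTrinomial n) {c : ZMod p} {r : ℕ}
    (hr : r < p - 1) (m : ℕ) : p * m + r ∈ ratioSet p c ↔ r ∈ ratioSet p c := by
  simp only [ratioSet, Set.mem_ofPred_eq]
  rw [add_assoc, centralTrinomial_mul_add (by lia), centralTrinomial_mul_add (by lia),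
    mul_left_comm, mul_right_inj' (centralTrinomial_cast_ne_zero hT m)]

lemma centralTrinomial_mul_succ (m : ℕ) :
    (centralTrinomial (p * (m + 1)) : ZMod p) = centralTrinomial (m + 1) := by
  have := centralTrinomial_mul_add (Fact.out : p.Prime).pos (m + 1)
  simpa [centralTrinomial_zero] using this

lemma mul_add_pred_mem_ratioSet {c : ZMod p} (m : ℕ) :
    p * m + (p - 1) ∈ ratioSet p c ↔ m ∈ ratioSet p (c * centralTrinomial (p - 1)) := by
  have hp : 0 < p := (Fact.out : p.Prime).pos
  have hm : p * m + (p - 1) + 1 = p * (m + 1) := by rw [mul_add_one]; lia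
  simp only [ratioSet, Set.mem_ofPred_eq]
  rw [hm, centralTrinomial_mul_succ, centralTrinomial_mul_add (by lia), mul_assoc,
    mul_comm (centralTrinomial m : ZMod p)]

lemma mem_ratioSet_of_reflect {n k : ℕ} (h : n + k + 2 = p) (hp3 : p ≠ 3) {c d : ZMod p}
    (hcd : c * d = -3) (hn : n ∈ ratioSet p c) : k ∈ ratioSet p d := by
  have reflect_n := centralTrinomial_reflect (p := p) (n := n) (k := k + 1) (by lia)
  have reflect_succ := centralTrinomial_reflect (p := p) (n := n + 1) (k := k) (by lia)
  rw [ratioSet, Set.mem_ofPred_eq] at hn ⊢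
  rw [hn] at reflect_succ
  refine mul_left_cancel₀ (pow_ne_zero (n + 1) (neg_three_ne_zero hp3)) ?_
  linear_combination -3 * reflect_n - d * reflect_succ -
    hcd * (centralTrinomial (p - 1) : ZMod p) * centralTrinomial n

lemma exists_mem_ratioSet (hp : 3 < p) {c : ZMod p} (hc : c ^ 2 = 1 ∨ c ^ 2 = 9) :
    ∃ r < p - 1, r ∈ ratioSet p c := by
  have zero_mem : 0 ∈ ratioSet p 1 := by
    simp [ratioSet, centralTrinomial_zero, centralTrinomial_one]
  have one_mem : 1 ∈ ratioSet p 3 := by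
    simp [ratioSet, centralTrinomial_one, centralTrinomial_two]
  have hc' : c = 1 ∨ c = 3 ∨ c = -3 ∨ c = -1 := by
    rw [sq_eq_one_iff, show (9 : ZMod p) = 3 ^ 2 by norm_num, sq_eq_sq_iff_eq_or_eq_neg] at hc
    tauto
  rcases hc' with rfl | rfl | rfl | rfl
  · exact ⟨0, by lia, zero_mem⟩
  · exact ⟨1, by lia, one_mem⟩
  · exact ⟨p - 2, by lia, mem_ratioSet_of_reflect (by lia) hp.ne' (by ring) zero_mem⟩
  · exact ⟨p - 3, by lia, mem_ratioSet_of_reflect (by lia) hp.ne' (by ring) one_mem⟩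

lemma dvd_motzkin_iff (hp2 : p ≠ 2) (n : ℕ) :
    (p : ℤ) ∣ motzkin n ↔
      (3 * centralTrinomial n + 2 * centralTrinomial (n + 1) - centralTrinomial (n + 2) : ZMod p)
        = 0 := by
  have two_ne_zero : (2 : ZMod p) ≠ 0 := Ring.two_ne_zero (by rwa [ZMod.ringChar_zmod_n])
  have two_mul_mod := congrArg (Int.cast : ℤ → ZMod p) (two_mul_motzkin n)
  push_cast at two_mul_mod
  rw [← two_mul_mod, mul_eq_zero_iff_left two_ne_zero, ZMod.intCast_zmod_eq_zero_iff_dvd]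

lemma dvd_motzkin_mul_add_iff (hp2 : p ≠ 2) (hT : ∀ n < p, ¬ (p : ℤ) ∣ centralTrinomial n)
    {r : ℕ} (hr : r + 2 < p) (m : ℕ) : (p : ℤ) ∣ motzkin (p * m + r) ↔ (p : ℤ) ∣ motzkin r := by
  rw [dvd_motzkin_iff hp2, dvd_motzkin_iff hp2, add_assoc, add_assoc,
    centralTrinomial_mul_add (by lia), centralTrinomial_mul_add (by lia),
    centralTrinomial_mul_add hr, mul_left_comm, mul_left_comm 2, ← mul_add, ← mul_sub,
    mul_eq_zero_iff_left (centralTrinomial_cast_ne_zero hT m)]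

lemma centralTrinomial_pred_eq {k : ℕ} (hk : k + 2 = p) :
    (centralTrinomial (p - 1) : ZMod p) = -3 * centralTrinomial k := by
  have reflect := centralTrinomial_reflect (p := p) (n := 1) (k := k) (by lia)
  rw [centralTrinomial_one, Int.cast_one, mul_one, pow_one] at reflect
  exact reflect.symm

lemma dvd_motzkin_mul_add_sub_two_iff (hp2 : p ≠ 2) (m : ℕ) :
    (p : ℤ) ∣ motzkin (p * m + (p - 2)) ↔ m ∈ ratioSet p (centralTrinomial (p - 1)) := by
  have two_le : 2 ≤ p := (Fact.out : p.Prime).two_le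
  have succ_eq : p * m + (p - 2) + 1 = p * m + (p - 1) := by lia
  have add_two_eq : p * m + (p - 2) + 2 = p * (m + 1) := by rw [mul_add_one]; lia
  rw [dvd_motzkin_iff hp2, succ_eq, add_two_eq, centralTrinomial_mul_succ,
    centralTrinomial_mul_add (by lia), centralTrinomial_mul_add (by lia), ratioSet,
    Set.mem_ofPred_eq, eq_comm (b := _ * _), ← sub_eq_zero (a := _ * _), iff_iff_eq]
  congr 1
  linear_combination (centralTrinomial m : ZMod p) *
    centralTrinomial_pred_eq (p := p) (k := p - 2) (by lia)

lemma dvd_motzkin_mul_add_sub_one_iff (hp2 : p ≠ 2) (m : ℕ) :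
    (p : ℤ) ∣ motzkin (p * m + (p - 1)) ↔ m ∈ ratioSet p (-3 * centralTrinomial (p - 1)) := by
  have two_le : 2 ≤ p := (Fact.out : p.Prime).two_le
  have succ_eq : p * m + (p - 1) + 1 = p * (m + 1) := by rw [mul_add_one]; lia
  have add_two_eq : p * m + (p - 1) + 2 = p * (m + 1) + 1 := by rw [mul_add_one]; lia
  rw [dvd_motzkin_iff hp2, succ_eq, add_two_eq, centralTrinomial_mul_succ,
    centralTrinomial_mul_add (by lia), centralTrinomial_mul_add (by lia), centralTrinomial_one,
    ratioSet, Set.mem_ofPred_eq, ← sub_eq_zero (b := -3 * _ * _), iff_iff_eq]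
  congr 1
  push_cast
  ring

lemma three_lt_of_forall_not_dvd_centralTrinomial (hp2 : p ≠ 2)
    (hT : ∀ n < p, ¬ (p : ℤ) ∣ centralTrinomial n) : 3 < p := by
  have two_le : 2 ≤ p := (Fact.out : p.Prime).two_le
  have ne_three : p ≠ 3 := by
    rintro rfl
    exact hT 2 (by norm_num) ⟨1, by rw [centralTrinomial_two]; norm_num⟩
  lia

lemma exists_hasDensity_ratioSet (hp : 3 < p) (hT : ∀ n < p, ¬ (p : ℤ) ∣ centralTrinomial n)
    {c : ZMod p} (hc : c ^ 2 = 1 ∨ c ^ 2 = 9) :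
    ∃ d, HasDensity (ratioSet p c) d ∧ 1 / (p - 1 : ℝ) ≤ d := by
  obtain ⟨ε, hε⟩ : ∃ ε : ZMod p, ε = centralTrinomial (p - 1) := ⟨_, rfl⟩
  have ε_sq : ε ^ 2 = 1 := hε ▸ centralTrinomial_pred_sq hp.ne'
  have hcε : (c * ε) ^ 2 = 1 ∨ (c * ε) ^ 2 = 9 := by rwa [mul_pow, ε_sq, mul_one]
  have hcεε : c * ε * ε = c := by rw [mul_assoc, ← sq, ε_sq, mul_one]
  refine ⟨_, HasDensity.of_swap_last_residue (B := ratioSet p (c * ε)) (by lia)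
    (fun r hr ↦ mul_add_mem_ratioSet hT hr)
    (fun m ↦ by rw [mul_add_pred_mem_ratioSet, hε])
    (fun r hr ↦ mul_add_mem_ratioSet hT hr)
    (fun m ↦ by rw [mul_add_pred_mem_ratioSet, ← hε, hcεε]), ?_⟩
  have one_le {c : ZMod p} (hc : c ^ 2 = 1 ∨ c ^ 2 = 9) :
      (1 : ℝ) ≤ countBelow (ratioSet p c) (p - 1) := by
    obtain ⟨r, hr, hmem⟩ := exists_mem_ratioSet hp hc
    exact_mod_cast countBelow_pos_of_mem hmem hr
  have hp' : (3 : ℝ) < p := mod_cast hp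
  calc 1 / (p - 1 : ℝ) = (p * 1 + 1) / (p ^ 2 - 1) := by
        rw [show (p : ℝ) ^ 2 - 1 = (p - 1) * (p + 1) by ring]
        field_simp
    _ ≤ _ := by
        gcongr
        · nlinarith
        · exact one_le hc
        · exact one_le hcε

lemma exists_hasDensity_dvd_motzkin_mul_add (hp : 3 < p)
    (hT : ∀ n < p, ¬ (p : ℤ) ∣ centralTrinomial n) {r : ℕ} (hr : r < p) :
    ∃ d, HasDensity {m | (p : ℤ) ∣ motzkin (p * m + r)} d ∧
      (if p ≤ r + 2 then 1 / (p - 1 : ℝ) else 0) ≤ d := by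
  classical
  have hp2 : p ≠ 2 := by lia
  have ε_sq := centralTrinomial_pred_sq (p := p) hp.ne'
  obtain hr' | rfl | rfl : r + 2 < p ∨ r = p - 2 ∨ r = p - 1 := by lia
  · simp only [dvd_motzkin_mul_add_iff hp2 hT hr', if_neg hr'.not_ge]
    exact ⟨_, hasDensity_setOf_const _, by split_ifs <;> norm_num⟩
  · simp only [dvd_motzkin_mul_add_sub_two_iff hp2, if_pos (show p ≤ p - 2 + 2 by lia)]
    exact exists_hasDensity_ratioSet hp hT (.inl ε_sq)
  · simp only [dvd_motzkin_mul_add_sub_one_iff hp2, if_pos (show p ≤ p - 1 + 2 by lia)]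
    exact exists_hasDensity_ratioSet hp hT (.inr (by rw [mul_pow, ε_sq]; norm_num))

end ModPrime

open scoped Classical in
theorem stmt15 (p : ℕ) (hp : p.Prime) (hp2 : 2 < p)
    (hT : ∀ n < p, ¬ (p : ℤ) ∣ centralTrinomial n) :
    ∃ D : ℝ,
      Tendsto
        (fun N : ℕ =>
          (((Finset.range N).filter (fun n => (p : ℤ) ∣ motzkin n)).card : ℝ) / N)
        atTop (nhds D) ∧
      2 / ((p : ℝ) * ((p : ℝ) - 1)) ≤ D := by
  have : Fact p.Prime := ⟨hp⟩
  have hp3 := three_lt_of_forall_not_dvd_centralTrinomial hp2.ne' hT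
  choose! d hd hd_ge using fun r (hr : r < p) ↦ exists_hasDensity_dvd_motzkin_mul_add hp3 hT hr
  refine ⟨(∑ r ∈ Finset.range p, d r) / p, ?_, ?_⟩
  · simpa only [HasDensity, countBelow_eq_card_filter_range, Set.mem_ofPred_eq] using
      HasDensity.of_residues (A := {n | (p : ℤ) ∣ motzkin n}) hp.pos hd
  · have filter_eq : (Finset.range p).filter (p ≤ · + 2) = {p - 2, p - 1} := by grind
    calc 2 / ((p : ℝ) * (p - 1)) =
          (∑ r ∈ Finset.range p, if p ≤ r + 2 then 1 / (p - 1 : ℝ) else 0) / p := by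
          rw [← Finset.sum_filter, filter_eq, Finset.sum_pair (by lia)]
          field_simp
          norm_num
      _ ≤ _ := by
          gcongr with r hr
          exact hd_ge r (Finset.mem_range.1 hr)
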